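/- Let G be a bipartite simple graph on n vertices with domination number γ, where 2 ≤ γ ≤ n−1. Then the Laplacian spectral radius of G satisfies μ(G) ≤ n − γ + 2, with equality if and only if G is isomorphic to K_{a, n−γ+2−a} ∪ (γ−2)K_1 for some integer a with 2 ≤ a ≤ ⌊(n−γ+2)/2⌋, i.e., the disjoint union of a complete bipartite graph on n−γ+2 vertices with both part sizes at least 2 and γ−2 isolated vertices. -/

import Mathlib

open SimpleGraph Matrix

/-- `S` is a dominating set of `G`: every vertex outside `S` has a neighbor in `S`. -/
def IsDominatingSet {V : Type*} (G : SimpleGraph V) (S : Set V) : Prop :=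
  ∀ v : V, v ∉ S → ∃ u ∈ S, G.Adj u v

/-- The domination number of a finite graph: the minimum cardinality of a dominating set. -/
noncomputable def dominationNumber {V : Type*} [Fintype V] (G : SimpleGraph V) : ℕ :=
  sInf {k : ℕ | ∃ S : Finset V, S.card = k ∧ IsDominatingSet G (S : Set V)}

theorem aux_lap {V : Type*} [Fintype V] [DecidableEq V] (G : SimpleGraph V) [DecidableRel G.Adj]
    (x : V → ℝ) (v : V) :
    (Matrix.toLin' (G.lapMatrix ℝ) x) v = ∑ w ∈ G.neighborFinset v, (x v - x w) := by
  rw [Matrix.toLin'_apply, SimpleGraph.lapMatrix_mulVec_apply, Finset.sum_sub_distrib]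
  simp

theorem aux_dom {V : Type*} [Fintype V] [DecidableEq V] (G : SimpleGraph V)
    (S : Finset V) (hS : IsDominatingSet G (S : Set V)) : dominationNumber G ≤ S.card :=
  Nat.sInf_le ⟨S, rfl, hS⟩

theorem aux_disj {V : Type*} [Fintype V] [DecidableEq V] (G : SimpleGraph V) [DecidableRel G.Adj]
    (hbip : G.Colorable 2) {u v : V} (h : G.Adj u v) :
    Disjoint (G.neighborFinset u) (G.neighborFinset v) := by
  obtain ⟨c⟩ := hbip
  rw [Finset.disjoint_left]
  intro w h1 h2
  rw [SimpleGraph.mem_neighborFinset] at h1 h2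
  have a1 := c.valid h
  have a2 := c.valid h1
  have a3 := c.valid h2
  generalize c u = p at *
  generalize c v = q at *
  generalize c w = r at *
  revert p q r
  decide

theorem aux_card {V : Type*} [Fintype V] [DecidableEq V] (G : SimpleGraph V) [DecidableRel G.Adj]
    (hbip : G.Colorable 2) {u v : V} (h : G.Adj u v) :
    G.degree u + G.degree v + (G.neighborFinset u ∪ G.neighborFinset v)ᶜ.card
      = Fintype.card V := by
  rw [← G.card_neighborFinset_eq_degree u, ← G.card_neighborFinset_eq_degree v,
    ← Finset.card_union_of_disjoint (aux_disj G hbip h), Finset.card_add_card_compl]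

theorem aux_bound {V : Type*} [Fintype V] [DecidableEq V] (G : SimpleGraph V) [DecidableRel G.Adj]
    (hbip : G.Colorable 2) {u v : V} (h : G.Adj u v) :
    dominationNumber G + (G.degree u + G.degree v) ≤ Fintype.card V + 2 := by
  have hc := aux_card G hbip h
  have := aux_dom G (insert u (insert v (G.neighborFinset u ∪ G.neighborFinset v)ᶜ)) (by
    intro w hw
    simp at hw
    by_cases h1 : G.Adj u w
    · exact ⟨u, by simp, h1⟩
    · exact ⟨v, by simp, by tauto⟩)
  have h2 := Finset.card_insert_le u (insert v (G.neighborFinset u ∪ G.neighborFinset v)ᶜ)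
  have h3 := Finset.card_insert_le v (G.neighborFinset u ∪ G.neighborFinset v)ᶜ
  omega

/-- the edge identity -/
theorem aux_edge {V : Type*} [Fintype V] [DecidableEq V] (G : SimpleGraph V) [DecidableRel G.Adj]
    (x : V → ℝ) (μ : ℝ) (hx : Matrix.toLin' (G.lapMatrix ℝ) x = μ • x) (u v : V) :
    μ * (x u - x v) = ∑ w ∈ G.neighborFinset u, (x u - x w)
      + ∑ w ∈ G.neighborFinset v, (x w - x v) := by
  have h1 := aux_lap G x u
  have h2 := aux_lap G x v
  rw [hx] at h1 h2
  simp only [Pi.smul_apply, smul_eq_mul] at h1 h2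
  have : ∑ w ∈ G.neighborFinset v, (x w - x v) = - ∑ w ∈ G.neighborFinset v, (x v - x w) := by
    rw [← Finset.sum_neg_distrib]; simp
  rw [this, ← h1, ← h2]; ring

theorem aux_max {V : Type*} [Fintype V] [DecidableEq V] (G : SimpleGraph V) [DecidableRel G.Adj]
    (x : V → ℝ) (μ : ℝ) (hx : Matrix.toLin' (G.lapMatrix ℝ) x = μ • x) (hx0 : x ≠ 0)
    (hμ : 0 < μ) : ∃ u v, G.Adj u v ∧ 0 < x u - x v ∧
      ∀ a b, G.Adj a b → x a - x b ≤ x u - x v := by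
  classical
  have hne : (Finset.univ.filter (fun p : V × V => G.Adj p.1 p.2 ∧ 0 < x p.1 - x p.2)).Nonempty := by
    by_contra hcon
    rw [Finset.not_nonempty_iff_eq_empty, Finset.filter_eq_empty_iff] at hcon
    have hc : ∀ a b, G.Adj a b → x a = x b := by
      intro a b hab
      have h1 := hcon (Finset.mem_univ (a, b))
      have h2 := hcon (Finset.mem_univ (b, a))
      simp only [hab, hab.symm, true_and] at h1 h2
      linarith
    apply hx0
    funext v
    have h1 := aux_lap G x v
    rw [hx, Finset.sum_eq_zero] at h1
    · simp only [Pi.smul_apply, smul_eq_mul] at h1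
      rcases mul_eq_zero.mp h1 with h | h
      · linarith
      · simpa using h
    · intro w hw
      rw [SimpleGraph.mem_neighborFinset] at hw
      rw [hc _ _ hw]; simp
  obtain ⟨⟨u, v⟩, hm, hmax⟩ := Finset.exists_max_image _ (fun p : V × V => x p.1 - x p.2) hne
  simp only [Finset.mem_filter, Finset.mem_univ, true_and] at hm hmax
  refine ⟨u, v, hm.1, hm.2, fun a b hab => ?_⟩
  by_cases h : 0 < x a - x b
  · exact hmax (a, b) ⟨hab, h⟩
  · linarith [hm.2]

theorem aux_le {V : Type*} [Fintype V] [DecidableEq V] (G : SimpleGraph V) [DecidableRel G.Adj]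
    (x : V → ℝ) (μ : ℝ) (hx : Matrix.toLin' (G.lapMatrix ℝ) x = μ • x) {u v : V}
    (hpos : 0 < x u - x v) (hmax : ∀ a b, G.Adj a b → x a - x b ≤ x u - x v) :
    μ ≤ G.degree u + G.degree v := by
  have he := aux_edge G x μ hx u v
  have h1 : ∑ w ∈ G.neighborFinset u, (x u - x w) ≤ G.degree u • (x u - x v) := by
    rw [← G.card_neighborFinset_eq_degree u]
    apply Finset.sum_le_card_nsmul
    intro w hw
    exact hmax _ _ (by simpa using hw)
  have h2 : ∑ w ∈ G.neighborFinset v, (x w - x v) ≤ G.degree v • (x u - x v) := by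
    rw [← G.card_neighborFinset_eq_degree v]
    apply Finset.sum_le_card_nsmul
    intro w hw
    rw [SimpleGraph.mem_neighborFinset] at hw
    exact hmax _ _ hw.symm
  rw [nsmul_eq_mul] at h1 h2
  have : μ * (x u - x v) ≤ (G.degree u + G.degree v) * (x u - x v) := by linarith
  exact le_of_mul_le_mul_right this hpos

theorem aux_eq {V : Type*} [Fintype V] [DecidableEq V] (G : SimpleGraph V) [DecidableRel G.Adj]
    (x : V → ℝ) (μ : ℝ) (hx : Matrix.toLin' (G.lapMatrix ℝ) x = μ • x) {u v : V}
    (hmax : ∀ a b, G.Adj a b → x a - x b ≤ x u - x v)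
    (hμ : μ = G.degree u + G.degree v) :
    (∀ w, G.Adj u w → x w = x v) ∧ (∀ w, G.Adj v w → x w = x u) := by
  have he := aux_edge G x μ hx u v
  have g1 : ∀ w ∈ G.neighborFinset u, x u - x w ≤ x u - x v := by
    intro w hw
    exact hmax _ _ (by simpa using hw)
  have g2 : ∀ w ∈ G.neighborFinset v, x w - x v ≤ x u - x v := by
    intro w hw
    rw [SimpleGraph.mem_neighborFinset] at hw
    exact hmax _ _ hw.symm
  have h1 := Finset.sum_le_sum g1
  have h2 := Finset.sum_le_sum g2
  have c1 : ∑ w ∈ G.neighborFinset u, (x u - x v) = G.degree u * (x u - x v) := by simp; ring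
  have c2 : ∑ w ∈ G.neighborFinset v, (x u - x v) = G.degree v * (x u - x v) := by simp; ring
  have e : μ * (x u - x v) = G.degree u * (x u - x v) + G.degree v * (x u - x v) := by
    rw [hμ]; ring
  have e1 := (Finset.sum_eq_sum_iff_of_le g1).mp (by linarith)
  have e2 := (Finset.sum_eq_sum_iff_of_le g2).mp (by linarith)
  constructor
  · intro w hw
    have := e1 w (by simpa using hw)
    linarith
  · intro w hw
    have := e2 w (by simpa using hw)
    linarith

theorem aux_iso {V : Type*} [Fintype V] [DecidableEq V] (G : SimpleGraph V)
    (A B T : Finset V) (a b c : ℕ) (hA : A.card = a) (hB : B.card = b) (hT : T.card = c)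
    (hAB : Disjoint A B) (hTc : T = (A ∪ B)ᶜ)
    (hadj : ∀ y z, G.Adj y z ↔ (y ∈ A ∧ z ∈ B) ∨ (y ∈ B ∧ z ∈ A)) :
    Nonempty (G ≃g ((completeBipartiteGraph (Fin a) (Fin b)) ⊕g (⊥ : SimpleGraph (Fin c)))) := by
  let eA := (Finset.equivFinOfCardEq hA).symm
  let eB := (Finset.equivFinOfCardEq hB).symm
  let eT := (Finset.equivFinOfCardEq hT).symm
  let f : (Fin a ⊕ Fin b) ⊕ Fin c → V :=
    Sum.elim (Sum.elim (fun i => (eA i : V)) (fun i => (eB i : V))) (fun i => (eT i : V))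
  have hAm : ∀ i, (eA i : V) ∈ A := fun i => (eA i).2
  have hBm : ∀ i, (eB i : V) ∈ B := fun i => (eB i).2
  have hTm : ∀ i, (eT i : V) ∈ T := fun i => (eT i).2
  have dAB : ∀ y, y ∈ A → y ∉ B := fun y h => Finset.disjoint_left.mp hAB h
  have dT : ∀ y, y ∈ T → y ∉ A ∧ y ∉ B := by
    intro y hy; rw [hTc] at hy; simpa using hy
  have hbij : Function.Bijective f := by
    constructor
    · rintro ((i | i) | i) ((j | j) | j) h <;> simp only [f, Sum.elim_inl, Sum.elim_inr] at h
      · rw [eA.injective (Subtype.ext h)]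
      · exact absurd (hBm j) (dAB _ (h ▸ hAm i))
      · exact absurd (h ▸ hAm i) (dT _ (hTm j)).1
      · exact absurd (h ▸ hBm i) (dAB _ (hAm j))
      · rw [eB.injective (Subtype.ext h)]
      · exact absurd (h ▸ hBm i) (dT _ (hTm j)).2
      · exact absurd (hAm j) (dT _ (h ▸ hTm i)).1
      · exact absurd (hBm j) (dT _ (h ▸ hTm i)).2
      · rw [eT.injective (Subtype.ext h)]
    · intro y
      by_cases h1 : y ∈ A
      · exact ⟨Sum.inl (Sum.inl (eA.symm ⟨y, h1⟩)), by simp [f]⟩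
      by_cases h2 : y ∈ B
      · exact ⟨Sum.inl (Sum.inr (eB.symm ⟨y, h2⟩)), by simp [f]⟩
      have h3 : y ∈ T := by rw [hTc]; simp [h1, h2]
      exact ⟨Sum.inr (eT.symm ⟨y, h3⟩), by simp [f]⟩
  have nA : ∀ i, (eA i : V) ∉ B := fun i => dAB _ (hAm i)
  have nB : ∀ i, (eB i : V) ∉ A := fun i h => dAB _ h (hBm i)
  have nT1 : ∀ i, (eT i : V) ∉ A := fun i => (dT _ (hTm i)).1
  have nT2 : ∀ i, (eT i : V) ∉ B := fun i => (dT _ (hTm i)).2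
  refine ⟨SimpleGraph.Iso.symm ⟨Equiv.ofBijective f hbij, ?_⟩⟩
  rintro ((i | i) | i) ((j | j) | j) <;>
    simp [f, hadj, hAm, hBm, nA, nB, nT1, nT2, completeBipartiteGraph]

theorem aux_conv {V : Type*} [Fintype V] [DecidableEq V] (G : SimpleGraph V) [DecidableRel G.Adj]
    (a b c : ℕ) (ha : 0 < a) (hb : 0 < b)
    (e : G ≃g ((completeBipartiteGraph (Fin a) (Fin b)) ⊕g (⊥ : SimpleGraph (Fin c)))) :
    Module.End.HasEigenvalue (Matrix.toLin' (G.lapMatrix ℝ)) ((a : ℝ) + b) := by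
  classical
  let g : (Fin a ⊕ Fin b) ⊕ Fin c → ℝ :=
    Sum.elim (Sum.elim (fun _ => (b : ℝ)) (fun _ => -(a : ℝ))) (fun _ => 0)
  refine Module.End.hasEigenvalue_of_hasEigenvector (x := fun v => g (e v)) ⟨?_, ?_⟩
  · rw [Module.End.mem_eigenspace_iff]
    funext v
    rw [aux_lap]
    have : ∑ w ∈ G.neighborFinset v, (g (e v) - g (e w)) =
        ∑ z, if ((completeBipartiteGraph (Fin a) (Fin b)) ⊕g (⊥ : SimpleGraph (Fin c))).Adj (e v) z
          then g (e v) - g z else 0 := by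
      rw [← Equiv.sum_comp e.toEquiv, SimpleGraph.neighborFinset_eq_filter, Finset.sum_filter]
      refine Finset.sum_congr rfl fun w _ => ?_
      have : ((completeBipartiteGraph (Fin a) (Fin b)) ⊕g (⊥ : SimpleGraph (Fin c))).Adj (e v)
        (e.toEquiv w) ↔ G.Adj v w := e.map_adj_iff
      simp only [this]
      rfl
    rw [this]
    simp only [Pi.smul_apply, smul_eq_mul]
    generalize e v = y
    rcases y with (i | i) | i <;>
      simp [g, Fintype.sum_sum_type, completeBipartiteGraph] <;> ring
  · intro h
    have := congrFun h (e.symm (Sum.inl (Sum.inl ⟨0, ha⟩)))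
    simp [g] at this
    omega

theorem aux_main {V : Type*} [Fintype V] [DecidableEq V] (G : SimpleGraph V) [DecidableRel G.Adj]
    (hγ2 : 2 ≤ dominationNumber G)
    (hbip : G.Colorable 2) (x : V → ℝ) (μ : ℝ)
    (hx : Matrix.toLin' (G.lapMatrix ℝ) x = μ • x) {u v : V} (huv : G.Adj u v)
    (hpos : 0 < x u - x v) (hmax : ∀ a b, G.Adj a b → x a - x b ≤ x u - x v)
    (hμ : μ = (Fintype.card V : ℝ) - dominationNumber G + 2) :
    G.degree u + G.degree v + dominationNumber G = Fintype.card V + 2 ∧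
    2 ≤ G.degree u ∧ 2 ≤ G.degree v ∧
    ∀ y z, G.Adj y z ↔ (y ∈ G.neighborFinset v ∧ z ∈ G.neighborFinset u) ∨
      (y ∈ G.neighborFinset u ∧ z ∈ G.neighborFinset v) := by
  -- any max edge has degree sum `s`, and the value structure
  have key : ∀ p q, G.Adj p q → x p = x u → x q = x v →
      G.degree p + G.degree q + dominationNumber G = Fintype.card V + 2 ∧
      (∀ w, G.Adj p w → x w = x v) ∧ (∀ w, G.Adj q w → x w = x u) := by
    intro p q hpq hp hq
    have hm : ∀ a b, G.Adj a b → x a - x b ≤ x p - x q := by rw [hp, hq]; exact hmax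
    have h1 := aux_le G x μ hx (u := p) (v := q) (by rw [hp, hq]; exact hpos) hm
    have h2 := aux_bound G hbip hpq
    have h2' : (dominationNumber G : ℝ) + (G.degree p + G.degree q) ≤ Fintype.card V + 2 := by
      exact_mod_cast h2
    have h3 := aux_eq G x μ hx hm (by linarith)
    rw [hp, hq] at h3
    refine ⟨?_, h3⟩
    have : (G.degree p : ℝ) + G.degree q + dominationNumber G = Fintype.card V + 2 := by linarith
    exact_mod_cast this
  obtain ⟨hs, hu, hv⟩ := key u v huv rfl rfl
  have hc := aux_card G hbip huv
  set T := (G.neighborFinset u ∪ G.neighborFinset v)ᶜ with hT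
  have mT : ∀ w, w ∈ T ↔ ¬ G.Adj u w ∧ ¬ G.Adj v w := by intro w; simp [hT]
  have hTc : T.card + 2 = dominationNumber G := by omega
  -- degree at least two
  have du : 2 ≤ G.degree u := by
    by_contra hlt
    have h0 : (G.neighborFinset u).card ≤ 1 := by
      rw [G.card_neighborFinset_eq_degree]; omega
    have := aux_dom G (insert v T) (by
      intro w hw
      simp [mT] at hw
      by_cases h : G.Adj v w
      · exact ⟨v, by simp, h⟩
      · have h1 : G.Adj u w := by tauto
        exact absurd (Finset.card_le_one.mp h0 w (by simpa using h1) v (by simpa using huv)) hw.1)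
    have := Finset.card_insert_le v T
    omega
  have dv : 2 ≤ G.degree v := by
    by_contra hlt
    have h0 : (G.neighborFinset v).card ≤ 1 := by
      rw [G.card_neighborFinset_eq_degree]; omega
    have := aux_dom G (insert u T) (by
      intro w hw
      simp [mT] at hw
      by_cases h : G.Adj u w
      · exact ⟨u, by simp, h⟩
      · have h1 : G.Adj v w := by tauto
        exact absurd (Finset.card_le_one.mp h0 w (by simpa using h1) u (by simpa using huv.symm)) hw.1)
    have := Finset.card_insert_le u T
    omega
  -- T is independent
  have Tind : ∀ t ∈ T, ∀ t' ∈ T, ¬ G.Adj t t' := by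
    intro t ht t' ht' hadj
    have := aux_dom G (insert u (insert v (T.erase t))) (by
      intro w hw
      simp only [Finset.coe_insert, Set.mem_insert_iff, Finset.mem_coe, Finset.mem_erase, mT,
        not_or, not_and] at hw
      by_cases h1 : G.Adj u w
      · exact ⟨u, by simp, h1⟩
      by_cases h2 : G.Adj v w
      · exact ⟨v, by simp, h2⟩
      have hwt : w = t := by
        by_contra hne
        exact hw.2.2 hne h1 h2
      subst hwt
      refine ⟨t', ?_, hadj.symm⟩
      simp [ht', hadj.ne'])
    have h2 := Finset.card_insert_le u (insert v (T.erase t))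
    have h3 := Finset.card_insert_le v (T.erase t)
    have h4 := Finset.card_erase_lt_of_mem ht
    omega
  -- T is isolated
  have Tiso1 : ∀ t ∈ T, ∀ w, G.Adj u w → ¬ G.Adj t w := by
    intro t ht w huw htw
    have k1 := key u w huw rfl (hu w huw)
    have xt : x t = x u := k1.2.2 t htw.symm
    have k2 := key t w htw xt (hu w huw)
    have hsub : G.neighborFinset t ⊆ G.neighborFinset u := by
      intro z hz
      rw [SimpleGraph.mem_neighborFinset] at hz ⊢
      by_contra hnz
      have xz := k2.2.1 z hz
      have hvz : ¬ G.Adj v z := fun h => by have := hv z h; linarith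
      exact Tind t ht z ((mT z).2 ⟨hnz, hvz⟩) hz
    have heq := Finset.eq_of_subset_of_card_le hsub (by
      simp only [G.card_neighborFinset_eq_degree]; omega)
    have : v ∈ G.neighborFinset t := by rw [heq]; simpa using huv
    rw [SimpleGraph.mem_neighborFinset] at this
    exact ((mT t).1 ht).2 this.symm
  have Tiso2 : ∀ t ∈ T, ∀ w, G.Adj v w → ¬ G.Adj t w := by
    intro t ht w hvw htw
    have k1 := key w v hvw.symm (hv w hvw) rfl
    have xt : x t = x v := k1.2.1 t htw.symm
    have k2 := key w t htw.symm (hv w hvw) xt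
    have hsub : G.neighborFinset t ⊆ G.neighborFinset v := by
      intro z hz
      rw [SimpleGraph.mem_neighborFinset] at hz ⊢
      by_contra hnz
      have xz := k2.2.2 z hz
      have huz : ¬ G.Adj u z := fun h => by have := hu z h; linarith
      exact Tind t ht z ((mT z).2 ⟨huz, hnz⟩) hz
    have heq := Finset.eq_of_subset_of_card_le hsub (by
      simp only [G.card_neighborFinset_eq_degree]; omega)
    have : u ∈ G.neighborFinset t := by rw [heq]; simpa using huv.symm
    rw [SimpleGraph.mem_neighborFinset] at this
    exact ((mT t).1 ht).1 this.symm
  have Tiso : ∀ t ∈ T, ∀ w, ¬ G.Adj t w := by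
    intro t ht w h
    by_cases h1 : G.Adj u w
    · exact Tiso1 t ht w h1 h
    by_cases h2 : G.Adj v w
    · exact Tiso2 t ht w h2 h
    exact Tind t ht w ((mT w).2 ⟨h1, h2⟩) h
  -- neighbourhoods on the side of `v`
  have nb : ∀ w, G.Adj u w → G.neighborFinset w = G.neighborFinset v := by
    intro w huw
    have k1 := key u w huw rfl (hu w huw)
    refine Finset.eq_of_subset_of_card_le ?_ (by
      simp only [G.card_neighborFinset_eq_degree]; omega)
    intro z hz
    rw [SimpleGraph.mem_neighborFinset] at hz ⊢
    by_contra hnz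
    have xz := k1.2.2 z hz
    have huz : ¬ G.Adj u z := fun h => by have := hu z h; linarith
    exact Tiso z ((mT z).2 ⟨huz, hnz⟩) w hz.symm
  have nb' : ∀ w, G.Adj u w → ∀ z, G.Adj w z ↔ G.Adj v z := by
    intro w hw z
    rw [← SimpleGraph.mem_neighborFinset, nb w hw, SimpleGraph.mem_neighborFinset]
  refine ⟨hs, du, dv, ?_⟩
  intro y z
  simp only [SimpleGraph.mem_neighborFinset]
  constructor
  · intro h
    by_cases h1 : G.Adj u y
    · exact Or.inr ⟨h1, (nb' y h1 z).1 h⟩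
    by_cases h2 : G.Adj v y
    · refine Or.inl ⟨h2, ?_⟩
      by_contra h3
      by_cases h4 : G.Adj v z
      · have k := key y v h2.symm (hv y h2) rfl
        have e1 := k.2.1 z h
        have e2 := hv z h4
        linarith
      · exact Tiso z ((mT z).2 ⟨h3, h4⟩) y h.symm
    · exact absurd h (Tiso y ((mT y).2 ⟨h1, h2⟩) z)
  · rintro (⟨h1, h2⟩ | ⟨h1, h2⟩)
    · exact ((nb' z h2 y).2 h1).symm
    · exact (nb' y h1 z).2 h2

theorem bipartite_laplacian_spectral_radius_le_and_eq_iff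
    {V : Type*} [Fintype V] [DecidableEq V] (G : SimpleGraph V) [DecidableRel G.Adj]
    (n γ : ℕ) (hn : Fintype.card V = n) (hγ : dominationNumber G = γ)
    (hγ2 : 2 ≤ γ) (hγn : γ ≤ n - 1)
    (hbip : G.Colorable 2) :
    (∀ μ : ℝ, Module.End.HasEigenvalue (Matrix.toLin' (G.lapMatrix ℝ)) μ →
      μ ≤ (n : ℝ) - γ + 2) ∧
    (Module.End.HasEigenvalue (Matrix.toLin' (G.lapMatrix ℝ)) ((n : ℝ) - γ + 2) ↔
      ∃ a : ℕ, 2 ≤ a ∧ a ≤ (n - γ + 2) / 2 ∧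
        Nonempty (G ≃g ((completeBipartiteGraph (Fin a) (Fin (n - γ + 2 - a))) ⊕g
          (⊥ : SimpleGraph (Fin (γ - 2)))))) := by
  have hle : (γ : ℝ) ≤ n := by
    have : γ ≤ n := by omega
    exact_mod_cast this
  refine ⟨?_, ?_, ?_⟩
  · intro μ hμ
    obtain ⟨x, hx⟩ := hμ.exists_hasEigenvector
    by_cases h0 : μ ≤ 0
    · linarith
    obtain ⟨u, v, huv, hpos, hmax⟩ := aux_max G x μ hx.apply_eq_smul hx.2 (not_le.mp h0)
    have h1 := aux_le G x μ hx.apply_eq_smul hpos hmax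
    have h2 := aux_bound G hbip huv
    rw [hn, hγ] at h2
    have h2' : (γ : ℝ) + (G.degree u + G.degree v) ≤ n + 2 := by exact_mod_cast h2
    linarith
  · intro hμ
    obtain ⟨x, hx⟩ := hμ.exists_hasEigenvector
    obtain ⟨u, v, huv, hpos, hmax⟩ := aux_max G x _ hx.apply_eq_smul hx.2 (by linarith)
    obtain ⟨hs, du, dv, hadj⟩ := aux_main G (hγ.symm ▸ hγ2) hbip x _ hx.apply_eq_smul huv hpos hmax
      (by rw [hn, hγ])
    have hc := aux_card G hbip huv
    have hd := aux_disj G hbip huv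
    rw [hn, hγ] at hs
    rw [hn] at hc
    have cu := G.card_neighborFinset_eq_degree u
    have cv := G.card_neighborFinset_eq_degree v
    rcases le_total (G.degree u) (G.degree v) with h | h
    · refine ⟨G.degree u, du, by omega, ?_⟩
      exact aux_iso G (G.neighborFinset u) (G.neighborFinset v) _ _ _ _ cu (by omega) (by omega)
        hd rfl (fun y z => (hadj y z).trans or_comm)
    · refine ⟨G.degree v, dv, by omega, ?_⟩
      exact aux_iso G (G.neighborFinset v) (G.neighborFinset u) _ _ _ _ cv (by omega)
        (by rw [Finset.union_comm]; omega) hd.symm rfl hadj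
  · rintro ⟨a, ha, ha2, ⟨e⟩⟩
    have := aux_conv G a (n - γ + 2 - a) (γ - 2) (by omega) (by omega) e
    convert this using 1
    have h : a + (n - γ + 2 - a) + γ = n + 2 := by omega
    have h' : (a : ℝ) + ((n - γ + 2 - a : ℕ) : ℝ) + γ = n + 2 := by exact_mod_cast h
    linarith
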